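/- Under the same hypotheses (commuting pairs (H₁⁰,H₂⁰), (H₁,H₂) with Hilbert–Schmidt differences V_j = H_j − H_j⁰, and finite-dimensional approximants P_N⁰, H_j^{0(N)}, P_N, H_j^{(N)} from the Weyl–von Neumann–Berg construction), for j = 1,2 and every integer k ≥ 1: ‖(H_j⁰)^k P_N⁰ − (P_N⁰ H_j⁰ P_N⁰)^k‖₂ → 0 and ‖(H_j)^k P_N − (P_N H_j P_N)^k‖₂ → 0 as N → ∞. -/

import Mathlib

/-!
If `X` and `Y` are bounded, then `X ^ k Z - Z Y ^ k` is a sum of `k` terms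
`X ^ i (X Z - Z Y) Y ^ (k - 1 - i)`, so its Hilbert–Schmidt norm is controlled by that of
`X Z - Z Y`. Take `X = A`, `Z = P` an idempotent and `Y = P A P`: then `Z Y ^ k = (P A P) ^ k` for
`k ≥ 1`, and `X Z - Z Y = [A, P] P`. Hence `‖A ^ k P - (P A P) ^ k‖₂` is at most a
multiple of `‖[A, P]‖₂` that depends only on `k`, `‖A‖` and `‖P‖`.
-/

open MeasureTheory Filter Topology

noncomputable section

/-- The trace computed along a Hilbert basis: `Tr T = Σ_i ⟪b i, T (b i)⟫`. -/
def traceAlong {H : Type*} [NormedAddCommGroup H] [InnerProductSpace ℂ H] [CompleteSpace H]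
    {ι : Type*} (b : HilbertBasis ι ℂ H) (T : H →L[ℂ] H) : ℂ :=
  ∑' i, (inner ℂ (b i) (T (b i)) : ℂ)

/-- The Schatten `p`-norm `‖T‖_p = (Tr |T|^p)^{1/p}`, via the functional calculus
`|T|^p = f(T*T)`, `f(t) = |t|^{p/2}`, with the trace computed along the basis `b`. -/
def schattenNorm {H : Type*} [NormedAddCommGroup H] [InnerProductSpace ℂ H] [CompleteSpace H]
    {ι : Type*} (b : HilbertBasis ι ℂ H) (p : ℝ) (T : H →L[ℂ] H) : ℝ :=
  (∑' i, (inner ℂ (b i)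
      ((cfc (fun t : ℝ => |t| ^ (p / 2)) (ContinuousLinearMap.adjoint T * T)) (b i)) : ℂ).re)
    ^ (1 / p)

open scoped ENNReal NNReal InnerProductSpace

section HilbertSchmidt

variable {𝕜 E F G : Type*} [RCLike 𝕜]
  [NormedAddCommGroup E] [InnerProductSpace 𝕜 E]
  [NormedAddCommGroup F] [InnerProductSpace 𝕜 F]
  [NormedAddCommGroup G] [InnerProductSpace 𝕜 G]
  {ι κ : Type*}

/-- The Hilbert–Schmidt norm `(∑ ‖T (b i)‖²)^(1/2)` along a Hilbert basis `b`. It takes values in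
`ℝ≥0∞`, so that `hsNorm b T ≠ ∞` expresses that `T` is a Hilbert–Schmidt operator. -/
def hsNorm (b : HilbertBasis ι 𝕜 E) (T : E →L[𝕜] F) : ℝ≥0∞ :=
  (∑' i, ‖T (b i)‖ₑ ^ 2) ^ (1 / 2 : ℝ)

lemma hsNorm_add_le (b : HilbertBasis ι 𝕜 E) (S T : E →L[𝕜] F) :
    hsNorm b (S + T) ≤ hsNorm b S + hsNorm b T := by
  let _ : MeasurableSpace ι := ⊤
  have minkowski := ENNReal.lintegral_Lp_add_le (μ := Measure.count) (p := 2)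
    (f := fun i ↦ ‖S (b i)‖ₑ) (g := fun i ↦ ‖T (b i)‖ₑ)
    measurable_from_top.aemeasurable measurable_from_top.aemeasurable one_le_two
  simp only [lintegral_count, Pi.add_apply, ENNReal.rpow_two] at minkowski
  refine le_trans ?_ minkowski
  unfold hsNorm
  gcongr with i
  exact enorm_add_le _ _

lemma hsNorm_neg (b : HilbertBasis ι 𝕜 E) (T : E →L[𝕜] F) : hsNorm b (-T) = hsNorm b T := by
  simp [hsNorm]

lemma hsNorm_sub_le (b : HilbertBasis ι 𝕜 E) (S T : E →L[𝕜] F) :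
    hsNorm b (S - T) ≤ hsNorm b S + hsNorm b T := by
  simpa only [sub_eq_add_neg, hsNorm_neg] using hsNorm_add_le b S (-T)

lemma hsNorm_comp_le_enorm_mul (b : HilbertBasis ι 𝕜 E) (X : F →L[𝕜] G) (T : E →L[𝕜] F) :
    hsNorm b (X ∘L T) ≤ ‖X‖ₑ * hsNorm b T := by
  calc hsNorm b (X ∘L T)
      ≤ (∑' i, ‖X‖ₑ ^ 2 * ‖T (b i)‖ₑ ^ 2) ^ (1 / 2 : ℝ) := by
        unfold hsNorm
        gcongr with i
        rw [← mul_pow]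
        gcongr
        exact X.le_opENorm _
    _ = ‖X‖ₑ * hsNorm b T := by
        rw [ENNReal.tsum_mul_left, ENNReal.mul_rpow_of_nonneg _ _ one_half_pos.le,
          ← ENNReal.rpow_two, ← ENNReal.rpow_mul, mul_one_div_cancel two_ne_zero,
          ENNReal.rpow_one, hsNorm]

lemma hsNorm_ne_top_of_finite [Finite ι] (b : HilbertBasis ι 𝕜 E) (T : E →L[𝕜] F) :
    hsNorm b T ≠ ∞ := by
  have := Fintype.ofFinite ι
  refine ENNReal.rpow_ne_top_of_nonneg one_half_pos.le ?_
  rw [tsum_fintype]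
  exact ENNReal.sum_ne_top.2 fun i _ ↦ ENNReal.pow_ne_top enorm_ne_top

lemma tsum_enorm_inner_sq (b : HilbertBasis ι 𝕜 E) (x : E) :
    ∑' i, ‖⟪b i, x⟫_𝕜‖ₑ ^ 2 = ‖x‖ₑ ^ 2 := by
  have hsum : HasSum (fun i ↦ ‖⟪b i, x⟫_𝕜‖ ^ 2) (‖x‖ ^ 2) := by
    simpa [HilbertBasis.repr_apply_apply] using lp.hasSum_norm (by simp) (b.repr x)
  simp only [← ofReal_norm, ← ENNReal.ofReal_pow (norm_nonneg _)]
  rw [← ENNReal.ofReal_tsum_of_nonneg (fun i ↦ by positivity) hsum.summable, hsum.tsum_eq]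

variable [CompleteSpace E]

lemma hsNorm_adjoint [CompleteSpace F] (b : HilbertBasis ι 𝕜 E) (c : HilbertBasis κ 𝕜 F)
    (T : E →L[𝕜] F) : hsNorm c (ContinuousLinearMap.adjoint T) = hsNorm b T := by
  unfold hsNorm
  congr 1
  simp_rw [← tsum_enorm_inner_sq b, ← tsum_enorm_inner_sq c]
  rw [ENNReal.tsum_comm]
  refine tsum_congr fun i ↦ tsum_congr fun j ↦ ?_
  rw [ContinuousLinearMap.adjoint_inner_right, ← inner_conj_symm, RCLike.enorm_conj]

lemma hsNorm_comp_le_mul_enorm [CompleteSpace F] [CompleteSpace G] (b : HilbertBasis ι 𝕜 E)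
    (c : HilbertBasis κ 𝕜 F) (T : F →L[𝕜] G) (X : E →L[𝕜] F) :
    hsNorm b (T ∘L X) ≤ hsNorm c T * ‖X‖ₑ := by
  obtain ⟨_, d, -⟩ := exists_hilbertBasis 𝕜 G
  rw [← hsNorm_adjoint b d, ← hsNorm_adjoint c d, ContinuousLinearMap.adjoint_comp, mul_comm,
    ← ContinuousLinearMap.adjoint.enorm_map X]
  exact hsNorm_comp_le_enorm_mul d _ _

lemma hsNorm_ne_top_of_finiteDimensional_range (b : HilbertBasis ι 𝕜 E) (T : E →L[𝕜] F)
    [FiniteDimensional 𝕜 (LinearMap.range (T : E →ₗ[𝕜] F))] : hsNorm b T ≠ ∞ := by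
  let T' : E →L[𝕜] LinearMap.range (T : E →ₗ[𝕜] F) := T.rangeRestrict
  let c := (stdOrthonormalBasis 𝕜 (LinearMap.range (T : E →ₗ[𝕜] F))).toHilbertBasis
  have hT : hsNorm b T = hsNorm b T' := rfl
  rw [hT, ← hsNorm_adjoint b c]
  exact hsNorm_ne_top_of_finite c _

lemma hsNorm_commutator_ne_top (b : HilbertBasis ι 𝕜 E) (A : E →L[𝕜] E) {T : E →L[𝕜] E}
    (hT : hsNorm b T ≠ ∞) : hsNorm b (A * T - T * A) ≠ ∞ := by
  have hAT : hsNorm b (A * T) ≠ ∞ :=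
    ne_top_of_le_ne_top (ENNReal.mul_ne_top enorm_ne_top hT) (hsNorm_comp_le_enorm_mul b A T)
  have hTA : hsNorm b (T * A) ≠ ∞ :=
    ne_top_of_le_ne_top (ENNReal.mul_ne_top hT enorm_ne_top) (hsNorm_comp_le_mul_enorm b b T A)
  exact ne_top_of_le_ne_top (ENNReal.add_ne_top.2 ⟨hAT, hTA⟩) (hsNorm_sub_le b _ _)

end HilbertSchmidt

section Compression

variable {R : Type*} [Ring R]

lemma pow_succ_mul_sub_mul_pow_succ (x y z : R) (n : ℕ) :
    x ^ (n + 1) * z - z * y ^ (n + 1) = x * (x ^ n * z - z * y ^ n) + (x * z - z * y) * y ^ n := by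
  rw [pow_succ', pow_succ']
  noncomm_ring

lemma mul_compression_pow {p : R} (hp : IsIdempotentElem p) (a : R) (n : ℕ) :
    p * (p * a * p) ^ (n + 1) = (p * a * p) ^ (n + 1) := by
  simp only [pow_succ', ← mul_assoc, hp.eq]

lemma mul_sub_mul_compression {p : R} (hp : IsIdempotentElem p) (a : R) :
    a * p - p * (p * a * p) = (a * p - p * a) * p := by
  simp only [sub_mul, ← mul_assoc, hp.eq, hp.mul_mul_self]

end Compression

section PowerBound

variable {𝕜 E : Type*} [RCLike 𝕜] [NormedAddCommGroup E] [InnerProductSpace 𝕜 E] [CompleteSpace E]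
  {ι : Type*} (b : HilbertBasis ι 𝕜 E)

lemma hsNorm_pow_mul_sub_mul_pow_le {X Y : E →L[𝕜] E} (Z : E →L[𝕜] E) {M : ℝ≥0}
    (hX : ‖X‖₊ ≤ M) (hY : ‖Y‖₊ ≤ M) (n : ℕ) :
    hsNorm b (X ^ (n + 1) * Z - Z * Y ^ (n + 1)) ≤ (n + 1) * M ^ n * hsNorm b (X * Z - Z * Y) := by
  induction n with
  | zero => simp
  | succ n ih =>
    have hXM : ‖X‖ₑ ≤ M := ENNReal.coe_le_coe.2 hX
    have hYM : ‖Y ^ (n + 1)‖ₑ ≤ (M : ℝ≥0∞) ^ (n + 1) := by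
      rw [← ENNReal.coe_pow]
      exact ENNReal.coe_le_coe.2 <| (nnnorm_pow_le' Y n.succ_pos).trans (by gcongr)
    rw [pow_succ_mul_sub_mul_pow_succ]
    calc _ ≤ ‖X‖ₑ * hsNorm b (X ^ (n + 1) * Z - Z * Y ^ (n + 1))
          + hsNorm b (X * Z - Z * Y) * ‖Y ^ (n + 1)‖ₑ :=
          (hsNorm_add_le b _ _).trans <|
            add_le_add (hsNorm_comp_le_enorm_mul b _ _) (hsNorm_comp_le_mul_enorm b b _ _)
      _ ≤ M * ((n + 1) * M ^ n * hsNorm b (X * Z - Z * Y))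
          + hsNorm b (X * Z - Z * Y) * M ^ (n + 1) := by gcongr
      _ = ((n + 1 : ℕ) + 1) * M ^ (n + 1) * hsNorm b (X * Z - Z * Y) := by
          push_cast
          ring

lemma hsNorm_pow_mul_sub_compression_pow_le {A P : E →L[𝕜] E} (hP : IsIdempotentElem P)
    {M : ℝ≥0} (hA : ‖A‖₊ ≤ M) (hPAP : ‖P * A * P‖₊ ≤ M) (n : ℕ) :
    hsNorm b (A ^ (n + 1) * P - (P * A * P) ^ (n + 1))
      ≤ (n + 1) * M ^ n * (hsNorm b (A * P - P * A) * ‖P‖ₑ) := by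
  have hbound := hsNorm_pow_mul_sub_mul_pow_le b P hA hPAP n
  rw [mul_compression_pow hP, mul_sub_mul_compression hP] at hbound
  exact hbound.trans <| mul_le_mul_right (hsNorm_comp_le_mul_enorm b b _ P) _

lemma tendsto_hsNorm_pow_mul_sub_compression_pow {α : Type*} {l : Filter α} (A : E →L[𝕜] E)
    {P : α → E →L[𝕜] E} (hP : ∀ a, IsIdempotentElem (P a)) {C : ℝ≥0} (hC : ∀ a, ‖P a‖₊ ≤ C)
    (hlim : Tendsto (fun a ↦ hsNorm b (A * P a - P a * A)) l (𝓝 0)) {k : ℕ} (hk : 1 ≤ k) :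
    Tendsto (fun a ↦ hsNorm b (A ^ k * P a - (P a * A * P a) ^ k)) l (𝓝 0) := by
  obtain ⟨n, rfl⟩ := Nat.exists_eq_add_of_le' hk
  let M : ℝ≥0 := max ‖A‖₊ (C * ‖A‖₊ * C)
  have hPAP (a : α) : ‖P a * A * P a‖₊ ≤ M := by
    refine le_max_of_le_right <| (nnnorm_mul_le _ _).trans ?_
    have hPA : ‖P a * A‖₊ ≤ C * ‖A‖₊ :=
      (nnnorm_mul_le _ _).trans (mul_le_mul_left (hC a) _)
    exact mul_le_mul' hPA (hC a)
  have hbound (a : α) : hsNorm b (A ^ (n + 1) * P a - (P a * A * P a) ^ (n + 1))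
      ≤ (n + 1) * M ^ n * C * hsNorm b (A * P a - P a * A) := by
    rw [mul_assoc _ (C : ℝ≥0∞), mul_comm (C : ℝ≥0∞)]
    refine (hsNorm_pow_mul_sub_compression_pow_le b (hP a) (le_max_left _ _) (hPAP a) n).trans ?_
    gcongr
    exact ENNReal.coe_le_coe.2 (hC a)
  have hmajorant : Tendsto
      (fun a ↦ (n + 1) * (M : ℝ≥0∞) ^ n * C * hsNorm b (A * P a - P a * A)) l (𝓝 0) := by
    have hconst : (n + 1) * (M : ℝ≥0∞) ^ n * C ≠ ∞ := by finiteness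
    simpa only [mul_zero] using ENNReal.Tendsto.const_mul hlim (Or.inr hconst)
  exact tendsto_of_tendsto_of_tendsto_of_le_of_le tendsto_const_nhds hmajorant
    (fun _ ↦ zero_le) hbound

end PowerBound

section Schatten

variable {H : Type*} [NormedAddCommGroup H] [InnerProductSpace ℂ H] [CompleteSpace H]
  {ι : Type*} (b : HilbertBasis ι ℂ H)

lemma cfc_abs_rpow_one_adjoint_mul_self (T : H →L[ℂ] H) :
    cfc (fun t : ℝ ↦ |t| ^ (1 : ℝ)) (ContinuousLinearMap.adjoint T * T)
      = ContinuousLinearMap.adjoint T * T := by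
  have hpos : 0 ≤ ContinuousLinearMap.adjoint T * T := star_mul_self_nonneg T
  calc cfc (fun t : ℝ ↦ |t| ^ (1 : ℝ)) (ContinuousLinearMap.adjoint T * T)
      = cfc id (ContinuousLinearMap.adjoint T * T) := cfc_congr fun t ht ↦ by
        simp [abs_of_nonneg (spectrum_nonneg_of_nonneg hpos ht)]
    _ = ContinuousLinearMap.adjoint T * T := cfc_id ℝ _ (IsSelfAdjoint.of_nonneg hpos)

lemma schattenNorm_two_eq_toReal_hsNorm (T : H →L[ℂ] H) :
    schattenNorm b 2 T = (hsNorm b T).toReal := by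
  have hdiag (i : ι) :
      (⟪b i, (ContinuousLinearMap.adjoint T * T) (b i)⟫_ℂ).re = (‖T (b i)‖ₑ ^ 2).toReal := by
    rw [mul_apply_eq_comp, ContinuousLinearMap.adjoint_inner_right,
      inner_self_eq_norm_sq_to_K, ENNReal.toReal_pow, toReal_enorm]
    norm_cast
  rw [schattenNorm, div_self two_ne_zero, cfc_abs_rpow_one_adjoint_mul_self, tsum_congr hdiag,
    ← ENNReal.tsum_toReal_eq fun i ↦ ENNReal.pow_ne_top enorm_ne_top, ENNReal.toReal_rpow, hsNorm]

theorem stmt14_general {α : Type*} {l : Filter α} (A : H →L[ℂ] H) {P : α → H →L[ℂ] H}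
    (hP : ∀ a, IsIdempotentElem (P a)) {C : ℝ≥0} (hC : ∀ a, ‖P a‖₊ ≤ C)
    (hHS : ∀ a, hsNorm b (A * P a - P a * A) ≠ ∞)
    (hlim : Tendsto (fun a ↦ schattenNorm b 2 (A * P a - P a * A)) l (𝓝 0))
    {k : ℕ} (hk : 1 ≤ k) :
    Tendsto (fun a ↦ schattenNorm b 2 (A ^ k * P a - (P a * A * P a) ^ k)) l (𝓝 0) := by
  simp only [schattenNorm_two_eq_toReal_hsNorm] at hlim ⊢
  have hlim' : Tendsto (fun a ↦ hsNorm b (A * P a - P a * A)) l (𝓝 0) :=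
    (ENNReal.tendsto_toReal_iff hHS ENNReal.zero_ne_top).1 hlim
  exact (ENNReal.tendsto_toReal ENNReal.zero_ne_top).comp <|
    tendsto_hsNorm_pow_mul_sub_compression_pow b A hP hC hlim' hk

lemma tendsto_schattenNorm_pow_mul_sub_compression_pow {α : Type*} {l : Filter α} (A : H →L[ℂ] H)
    {P : α → H →L[ℂ] H} (hP : ∀ a, IsStarProjection (P a))
    (hfin : ∀ a, FiniteDimensional ℂ (LinearMap.range (P a : H →ₗ[ℂ] H)))
    (hlim : Tendsto (fun a ↦ schattenNorm b 2 (A * P a - P a * A)) l (𝓝 0))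
    {k : ℕ} (hk : 1 ≤ k) :
    Tendsto (fun a ↦ schattenNorm b 2 (A ^ k * P a - (P a * A * P a) ^ k)) l (𝓝 0) :=
  stmt14_general b A (fun a ↦ (hP a).isIdempotentElem) (C := 1) (fun a ↦ (hP a).norm_le)
    (fun a ↦
      have := hfin a
      hsNorm_commutator_ne_top b A (hsNorm_ne_top_of_finiteDimensional_range b (P a)))
    hlim hk

end Schatten

/-- Under the same hypotheses, for `j = 1,2` and every `k ≥ 1`:
`‖(H_j⁰)^k P_N⁰ − (P_N⁰H_j⁰P_N⁰)^k‖₂ → 0` and `‖(H_j)^k P_N − (P_N H_j P_N)^k‖₂ → 0`. -/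
theorem stmt14
 {H : Type*} [NormedAddCommGroup H] [InnerProductSpace ℂ H] [CompleteSpace H]
    [TopologicalSpace.SeparableSpace H]
    (b : HilbertBasis ℕ ℂ H)
    (H10 H20 H1 H2 : H →L[ℂ] H)
    (h10sa : IsSelfAdjoint H10) (h20sa : IsSelfAdjoint H20)
    (h1sa : IsSelfAdjoint H1) (h2sa : IsSelfAdjoint H2)
    (hcomm0 : Commute H10 H20) (hcomm : Commute H1 H2)
    (hV1 : Summable fun i => ‖(H1 - H10) (b i)‖ ^ 2)
    (hV2 : Summable fun i => ‖(H2 - H20) (b i)‖ ^ 2)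
    (P0 P : ℕ → H →L[ℂ] H)
    (hP0proj : ∀ N, P0 N * P0 N = P0 N) (hP0sa : ∀ N, IsSelfAdjoint (P0 N))
    (hP0fin : ∀ N, FiniteDimensional ℂ (LinearMap.range (P0 N : H →ₗ[ℂ] H)))
    (hP0mono : ∀ N, LinearMap.range (P0 N : H →ₗ[ℂ] H)
      ≤ LinearMap.range (P0 (N + 1) : H →ₗ[ℂ] H))
    (hP0lim : ∀ x : H, Tendsto (fun N => P0 N x) atTop (𝓝 x))
    (hPproj : ∀ N, P N * P N = P N) (hPsa : ∀ N, IsSelfAdjoint (P N))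
    (hPfin : ∀ N, FiniteDimensional ℂ (LinearMap.range (P N : H →ₗ[ℂ] H)))
    (hPmono : ∀ N, LinearMap.range (P N : H →ₗ[ℂ] H)
      ≤ LinearMap.range (P (N + 1) : H →ₗ[ℂ] H))
    (hPlim : ∀ x : H, Tendsto (fun N => P N x) atTop (𝓝 x))
    (H10N H20N H1N H2N : ℕ → H →L[ℂ] H)
    (h10Nsa : ∀ N, IsSelfAdjoint (H10N N)) (h20Nsa : ∀ N, IsSelfAdjoint (H20N N))
    (h1Nsa : ∀ N, IsSelfAdjoint (H1N N)) (h2Nsa : ∀ N, IsSelfAdjoint (H2N N))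
    (hcomm0N : ∀ N, Commute (H10N N) (H20N N)) (hcommN : ∀ N, Commute (H1N N) (H2N N))
    (hsub0 : ∀ N, P0 N * H10N N * P0 N = H10N N * P0 N
      ∧ P0 N * H20N N * P0 N = H20N N * P0 N)
    (hsub : ∀ N, P N * H1N N * P N = H1N N * P N ∧ P N * H2N N * P N = H2N N * P N)
    (happrox0 : ∀ p : ℝ, 2 ≤ p →
      Tendsto (fun N => schattenNorm b p (H10 * P0 N - P0 N * H10)) atTop (𝓝 0) ∧
      Tendsto (fun N => schattenNorm b p (H20 * P0 N - P0 N * H20)) atTop (𝓝 0) ∧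
      Tendsto (fun N => schattenNorm b p (P0 N * H10 * P0 N - H10N N * P0 N)) atTop (𝓝 0) ∧
      Tendsto (fun N => schattenNorm b p (P0 N * H20 * P0 N - H20N N * P0 N)) atTop (𝓝 0))
    (happrox : ∀ p : ℝ, 2 ≤ p →
      Tendsto (fun N => schattenNorm b p (H1 * P N - P N * H1)) atTop (𝓝 0) ∧
      Tendsto (fun N => schattenNorm b p (H2 * P N - P N * H2)) atTop (𝓝 0) ∧
      Tendsto (fun N => schattenNorm b p (P N * H1 * P N - H1N N * P N)) atTop (𝓝 0) ∧
      Tendsto (fun N => schattenNorm b p (P N * H2 * P N - H2N N * P N)) atTop (𝓝 0))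
    : ∀ k : ℕ, 1 ≤ k →
      Tendsto (fun N => schattenNorm b 2 (H10 ^ k * P0 N - (P0 N * H10 * P0 N) ^ k))
        atTop (𝓝 0) ∧
      Tendsto (fun N => schattenNorm b 2 (H20 ^ k * P0 N - (P0 N * H20 * P0 N) ^ k))
        atTop (𝓝 0) ∧
      Tendsto (fun N => schattenNorm b 2 (H1 ^ k * P N - (P N * H1 * P N) ^ k))
        atTop (𝓝 0) ∧
      Tendsto (fun N => schattenNorm b 2 (H2 ^ k * P N - (P N * H2 * P N) ^ k))
        atTop (𝓝 0) := by
  intro k hk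
  obtain ⟨hlim10, hlim20, -, -⟩ := happrox0 2 le_rfl
  obtain ⟨hlim1, hlim2, -, -⟩ := happrox 2 le_rfl
  have hP0 (N : ℕ) : IsStarProjection (P0 N) := ⟨hP0proj N, hP0sa N⟩
  have hP (N : ℕ) : IsStarProjection (P N) := ⟨hPproj N, hPsa N⟩
  exact ⟨tendsto_schattenNorm_pow_mul_sub_compression_pow b H10 hP0 hP0fin hlim10 hk,
    tendsto_schattenNorm_pow_mul_sub_compression_pow b H20 hP0 hP0fin hlim20 hk,
    tendsto_schattenNorm_pow_mul_sub_compression_pow b H1 hP hPfin hlim1 hk,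
    tendsto_schattenNorm_pow_mul_sub_compression_pow b H2 hP hPfin hlim2 hk⟩

end
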